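/- arXiv:1403.3130 — 2 statements merged into one kernel-verified Lean document; each statement's English description precedes it below -/
import Mathlib

section
/- Let (A, {,}_A, d) be a differential graded Poisson algebra over a field k and (M, {,}_M, ∂) a left differential graded Poisson module over A. Then M is a left differential graded module over the differential graded algebra A^e under the action determined by m_a · x := ax and h_a · x := {a,x}_M for homogeneous a ∈ A, x ∈ M; in particular this action respects all defining relations of A^e and satisfies ∂(u·x) = ∂_{A^e}(u)·x + (-1)^{|u|}u·∂(x). -/
open scoped TensorProduct

noncomputable section

namespace DGPaper

universe u

/-- A differential graded Lie algebra structure on a `k`-vector space `V`. -/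
structure DGLAOn (k : Type u) [Field k] (V : Type u) [AddCommGroup V] [Module k V] where
  gr : ℤ → Submodule k V
  decomp : DirectSum.Decomposition gr
  br : V →ₗ[k] V →ₗ[k] V
  br_mem : ∀ {i j : ℤ} {a b : V}, a ∈ gr i → b ∈ gr j → br a b ∈ gr (i + j)
  br_antisymm : ∀ {i j : ℤ} {a b : V}, a ∈ gr i → b ∈ gr j →
    br a b = -(((-1 : k) ^ (i * j)) • br b a)
  br_jacobi : ∀ {i j l : ℤ} {a b c : V}, a ∈ gr i → b ∈ gr j → c ∈ gr l →
    br a (br b c) = br (br a b) c + ((-1 : k) ^ (i * j)) • br b (br a c)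
  d : V →ₗ[k] V
  d_mem : ∀ {i : ℤ} {a : V}, a ∈ gr i → d a ∈ gr (i + 1)
  d_sq : ∀ a : V, d (d a) = 0
  d_br : ∀ {i j : ℤ} {a b : V}, a ∈ gr i → b ∈ gr j →
    d (br a b) = br (d a) b + ((-1 : k) ^ i) • br a (d b)

/-- A differential graded (associative, unital) algebra structure on a `k`-vector space `N`. -/
structure DGAOn (k : Type u) [Field k] (N : Type u) [AddCommGroup N] [Module k N] where
  gr : ℤ → Submodule k N
  decomp : DirectSum.Decomposition gr
  mul : N →ₗ[k] N →ₗ[k] N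
  one : N
  one_mem : one ∈ gr 0
  mul_mem : ∀ {i j : ℤ} {a b : N}, a ∈ gr i → b ∈ gr j → mul a b ∈ gr (i + j)
  mul_assoc : ∀ a b c : N, mul (mul a b) c = mul a (mul b c)
  one_mul : ∀ a : N, mul one a = a
  mul_one : ∀ a : N, mul a one = a
  d : N →ₗ[k] N
  d_mem : ∀ {i : ℤ} {a : N}, a ∈ gr i → d a ∈ gr (i + 1)
  d_sq : ∀ a : N, d (d a) = 0
  d_mul : ∀ {i j : ℤ} {a b : N}, a ∈ gr i → b ∈ gr j →
    d (mul a b) = mul (d a) b + ((-1 : k) ^ i) • mul a (d b)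

/-- A differential graded Poisson algebra structure on a `k`-vector space `M`. -/
structure DGPAOn (k : Type u) [Field k] (M : Type u) [AddCommGroup M] [Module k M] where
  gr : ℤ → Submodule k M
  decomp : DirectSum.Decomposition gr
  mul : M →ₗ[k] M →ₗ[k] M
  one : M
  one_mem : one ∈ gr 0
  mul_mem : ∀ {i j : ℤ} {a b : M}, a ∈ gr i → b ∈ gr j → mul a b ∈ gr (i + j)
  mul_assoc : ∀ a b c : M, mul (mul a b) c = mul a (mul b c)
  one_mul : ∀ a : M, mul one a = a
  mul_one : ∀ a : M, mul a one = a
  mul_comm : ∀ {i j : ℤ} {a b : M}, a ∈ gr i → b ∈ gr j →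
    mul a b = ((-1 : k) ^ (i * j)) • mul b a
  br : M →ₗ[k] M →ₗ[k] M
  br_mem : ∀ {i j : ℤ} {a b : M}, a ∈ gr i → b ∈ gr j → br a b ∈ gr (i + j)
  br_antisymm : ∀ {i j : ℤ} {a b : M}, a ∈ gr i → b ∈ gr j →
    br a b = -(((-1 : k) ^ (i * j)) • br b a)
  br_jacobi : ∀ {i j l : ℤ} {a b c : M}, a ∈ gr i → b ∈ gr j → c ∈ gr l →
    br a (br b c) = br (br a b) c + ((-1 : k) ^ (i * j)) • br b (br a c)
  br_deriv : ∀ {i j l : ℤ} {a b c : M}, a ∈ gr i → b ∈ gr j → c ∈ gr l →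
    br a (mul b c) = mul (br a b) c + ((-1 : k) ^ (i * j)) • mul b (br a c)
  d : M →ₗ[k] M
  d_mem : ∀ {i : ℤ} {a : M}, a ∈ gr i → d a ∈ gr (i + 1)
  d_sq : ∀ a : M, d (d a) = 0
  d_br : ∀ {i j : ℤ} {a b : M}, a ∈ gr i → b ∈ gr j →
    d (br a b) = br (d a) b + ((-1 : k) ^ i) • br a (d b)
  d_mul : ∀ {i j : ℤ} {a b : M}, a ∈ gr i → b ∈ gr j →
    d (mul a b) = mul (d a) b + ((-1 : k) ^ i) • mul a (d b)

section Defs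

variable {k : Type u} [Field k]

/-- The differential graded Lie algebra underlying a differential graded Poisson algebra. -/
def DGPAOn.toLie {M : Type u} [AddCommGroup M] [Module k M] (P : DGPAOn k M) :
    DGLAOn k M where
  gr := P.gr
  decomp := P.decomp
  br := P.br
  br_mem := P.br_mem
  br_antisymm := P.br_antisymm
  br_jacobi := P.br_jacobi
  d := P.d
  d_mem := P.d_mem
  d_sq := P.d_sq
  d_br := P.d_br

section Maps

variable {M N : Type u} [AddCommGroup M] [Module k M] [AddCommGroup N] [Module k N]

/-- A morphism of differential graded algebras (degree-0, multiplicative, unital,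
commuting with the differentials). -/
def IsDGAHom (E : DGAOn k M) (F : DGAOn k N) (f : M →ₗ[k] N) : Prop :=
  (∀ {n : ℤ} {x : M}, x ∈ E.gr n → f x ∈ F.gr n) ∧
  (∀ x y : M, f (E.mul x y) = F.mul (f x) (f y)) ∧
  f E.one = F.one ∧
  ∀ x : M, f (E.d x) = F.d (f x)

/-- A morphism of differential graded Poisson algebras. -/
def IsDGPAHom (P : DGPAOn k M) (Q : DGPAOn k N) (f : M →ₗ[k] N) : Prop :=
  (∀ {n : ℤ} {x : M}, x ∈ P.gr n → f x ∈ Q.gr n) ∧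
  (∀ x y : M, f (P.mul x y) = Q.mul (f x) (f y)) ∧
  f P.one = Q.one ∧
  (∀ x : M, f (P.d x) = Q.d (f x)) ∧
  ∀ x y : M, f (P.br x y) = Q.br (f x) (f y)

end Maps

section Tensor

variable {A B : Type u} [AddCommGroup A] [Module k A] [AddCommGroup B] [Module k B]

/-- `R` is the tensor product differential graded Poisson algebra structure on `A ⊗[k] B`
induced by `P` and `Q`. -/
def IsTensorDGPA (P : DGPAOn k A) (Q : DGPAOn k B) (R : DGPAOn k (A ⊗[k] B)) : Prop :=
  (∀ n : ℤ, R.gr n = Submodule.span k {z : A ⊗[k] B |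
      ∃ (i j : ℤ) (a : A) (b : B), i + j = n ∧ a ∈ P.gr i ∧ b ∈ Q.gr j ∧ z = a ⊗ₜ[k] b}) ∧
  R.one = P.one ⊗ₜ[k] Q.one ∧
  (∀ {i j i' j' : ℤ} {a a' : A} {b b' : B},
      a ∈ P.gr i → b ∈ Q.gr j → a' ∈ P.gr i' → b' ∈ Q.gr j' →
    R.mul (a ⊗ₜ[k] b) (a' ⊗ₜ[k] b') = ((-1 : k) ^ (i' * j)) • (P.mul a a' ⊗ₜ[k] Q.mul b b')) ∧
  (∀ {i j : ℤ} {a : A} {b : B}, a ∈ P.gr i → b ∈ Q.gr j →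
    R.d (a ⊗ₜ[k] b) = P.d a ⊗ₜ[k] b + ((-1 : k) ^ i) • (a ⊗ₜ[k] Q.d b)) ∧
  (∀ {i j i' j' : ℤ} {a a' : A} {b b' : B},
      a ∈ P.gr i → b ∈ Q.gr j → a' ∈ P.gr i' → b' ∈ Q.gr j' →
    R.br (a ⊗ₜ[k] b) (a' ⊗ₜ[k] b') =
      ((-1 : k) ^ (i' * j)) • (P.br a a' ⊗ₜ[k] Q.mul b b' + P.mul a a' ⊗ₜ[k] Q.br b b'))

/-- `G` is the tensor product differential graded algebra structure on `A ⊗[k] B`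
induced by `E` and `F` (with the Koszul sign rule). -/
def IsTensorDGA (E : DGAOn k A) (F : DGAOn k B) (G : DGAOn k (A ⊗[k] B)) : Prop :=
  (∀ n : ℤ, G.gr n = Submodule.span k {z : A ⊗[k] B |
      ∃ (i j : ℤ) (x : A) (y : B), i + j = n ∧ x ∈ E.gr i ∧ y ∈ F.gr j ∧ z = x ⊗ₜ[k] y}) ∧
  G.one = E.one ⊗ₜ[k] F.one ∧
  (∀ {i j i' j' : ℤ} {x x' : A} {y y' : B},
      x ∈ E.gr i → y ∈ F.gr j → x' ∈ E.gr i' → y' ∈ F.gr j' →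
    G.mul (x ⊗ₜ[k] y) (x' ⊗ₜ[k] y') = ((-1 : k) ^ (i' * j)) • (E.mul x x' ⊗ₜ[k] F.mul y y')) ∧
  (∀ {i j : ℤ} {x : A} {y : B}, x ∈ E.gr i → y ∈ F.gr j →
    G.d (x ⊗ₜ[k] y) = E.d x ⊗ₜ[k] y + ((-1 : k) ^ i) • (x ⊗ₜ[k] F.d y))

end Tensor

section Env

variable {M : Type u} [AddCommGroup M] [Module k M]

/-- The defining relations of the universal enveloping algebra `A^e` of a differential
graded Poisson algebra, imposed on the tensor algebra of `M × M`; the first copy of `M`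
gives the generators `m_a`, the second copy the generators `h_a`. -/
inductive EnvRel (P : DGPAOn k M) :
    TensorAlgebra k (M × M) → TensorAlgebra k (M × M) → Prop
  | relone : EnvRel P (TensorAlgebra.ι k ((P.one, 0) : M × M)) 1
  | relmul (a b : M) :
      EnvRel P (TensorAlgebra.ι k ((P.mul a b, 0) : M × M))
        (TensorAlgebra.ι k ((a, 0) : M × M) * TensorAlgebra.ι k ((b, 0) : M × M))
  | relhmul {i j : ℤ} {a b : M} (ha : a ∈ P.gr i) (hb : b ∈ P.gr j) :
      EnvRel P (TensorAlgebra.ι k ((0, P.mul a b) : M × M))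
        (TensorAlgebra.ι k ((a, 0) : M × M) * TensorAlgebra.ι k ((0, b) : M × M) +
          ((-1 : k) ^ (i * j)) •
            (TensorAlgebra.ι k ((b, 0) : M × M) * TensorAlgebra.ι k ((0, a) : M × M)))
  | relmbr {i j : ℤ} {a b : M} (ha : a ∈ P.gr i) (hb : b ∈ P.gr j) :
      EnvRel P (TensorAlgebra.ι k ((P.br a b, 0) : M × M))
        (TensorAlgebra.ι k ((0, a) : M × M) * TensorAlgebra.ι k ((b, 0) : M × M) -
          ((-1 : k) ^ (i * j)) •
            (TensorAlgebra.ι k ((b, 0) : M × M) * TensorAlgebra.ι k ((0, a) : M × M)))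
  | relhbr {i j : ℤ} {a b : M} (ha : a ∈ P.gr i) (hb : b ∈ P.gr j) :
      EnvRel P (TensorAlgebra.ι k ((0, P.br a b) : M × M))
        (TensorAlgebra.ι k ((0, a) : M × M) * TensorAlgebra.ι k ((0, b) : M × M) -
          ((-1 : k) ^ (i * j)) •
            (TensorAlgebra.ι k ((0, b) : M × M) * TensorAlgebra.ι k ((0, a) : M × M)))

/-- The universal enveloping algebra `A^e` of a differential graded Poisson algebra,
as a quotient of the tensor algebra on two copies of `A`. -/
abbrev Env (P : DGPAOn k M) : Type u := RingQuot (EnvRel P)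

/-- The generators `m_a` of `A^e`. -/
def mgen (P : DGPAOn k M) : M →ₗ[k] Env P :=
  (RingQuot.mkAlgHom k (EnvRel P)).toLinearMap ∘ₗ
    ((TensorAlgebra.ι k : (M × M) →ₗ[k] TensorAlgebra k (M × M)) ∘ₗ LinearMap.inl k M M)

/-- The generators `h_a` of `A^e`. -/
def hgen (P : DGPAOn k M) : M →ₗ[k] Env P :=
  (RingQuot.mkAlgHom k (EnvRel P)).toLinearMap ∘ₗ
    ((TensorAlgebra.ι k : (M × M) →ₗ[k] TensorAlgebra k (M × M)) ∘ₗ LinearMap.inr k M M)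

/-- `E` is the differential graded algebra structure on `A^e`, with the ring
multiplication of `A^e`, grading `|m_a| = |h_a| = |a|` and differential determined by
`∂(m_a) = m_{d a}`, `∂(h_a) = h_{d a}` and the graded Leibniz rule. -/
def IsEnvDGA (P : DGPAOn k M) (E : DGAOn k (Env P)) : Prop :=
  (∀ x y : Env P, E.mul x y = x * y) ∧
  E.one = 1 ∧
  (∀ {i : ℤ} {a : M}, a ∈ P.gr i → mgen P a ∈ E.gr i) ∧
  (∀ {i : ℤ} {a : M}, a ∈ P.gr i → hgen P a ∈ E.gr i) ∧
  (∀ a : M, E.d (mgen P a) = mgen P (P.d a)) ∧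
  (∀ a : M, E.d (hgen P a) = hgen P (P.d a))

end Env

section Lie

variable {V : Type u} [AddCommGroup V] [Module k V]

/-- The defining relations of the universal enveloping algebra of a differential graded
Lie algebra. -/
inductive LieRel (L : DGLAOn k V) : TensorAlgebra k V → TensorAlgebra k V → Prop
  | rel {i j : ℤ} {a b : V} (ha : a ∈ L.gr i) (hb : b ∈ L.gr j) :
      LieRel L
        (TensorAlgebra.ι k a * TensorAlgebra.ι k b -
          ((-1 : k) ^ (i * j)) • (TensorAlgebra.ι k b * TensorAlgebra.ι k a))
        (TensorAlgebra.ι k (L.br a b))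

/-- The universal enveloping algebra `U(L)` of a differential graded Lie algebra `L`. -/
abbrev ULie (L : DGLAOn k V) : Type u := RingQuot (LieRel L)

/-- The canonical map `L → U(L)`. -/
def uGen (L : DGLAOn k V) : V →ₗ[k] ULie L :=
  (RingQuot.mkAlgHom k (LieRel L)).toLinearMap ∘ₗ TensorAlgebra.ι k

/-- `E` is the differential graded algebra structure of `U(L)`. -/
def IsULieDGA (L : DGLAOn k V) (E : DGAOn k (ULie L)) : Prop :=
  (∀ x y : ULie L, E.mul x y = x * y) ∧
  E.one = 1 ∧
  (∀ {i : ℤ} {a : V}, a ∈ L.gr i → uGen L a ∈ E.gr i) ∧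
  (∀ a : V, E.d (uGen L a) = uGen L (L.d a))

/-- The graded-symmetry relations defining the graded symmetric algebra of `L`. -/
inductive SymRel (L : DGLAOn k V) : TensorAlgebra k V → TensorAlgebra k V → Prop
  | rel {i j : ℤ} {a b : V} (ha : a ∈ L.gr i) (hb : b ∈ L.gr j) :
      SymRel L (TensorAlgebra.ι k a * TensorAlgebra.ι k b)
        (((-1 : k) ^ (i * j)) • (TensorAlgebra.ι k b * TensorAlgebra.ι k a))

/-- The graded symmetric algebra `𝕊L` of a differential graded Lie algebra `L`. -/
abbrev SymAlg (L : DGLAOn k V) : Type u := RingQuot (SymRel L)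

/-- The canonical map `L → 𝕊L`. -/
def sGen (L : DGLAOn k V) : V →ₗ[k] SymAlg L :=
  (RingQuot.mkAlgHom k (SymRel L)).toLinearMap ∘ₗ TensorAlgebra.ι k

/-- `R` is the differential graded Poisson algebra structure on `𝕊L` with differential
extending `d` and bracket extending the Lie bracket of `L` as a graded biderivation. -/
def IsSymDGPA (L : DGLAOn k V) (R : DGPAOn k (SymAlg L)) : Prop :=
  (∀ x y : SymAlg L, R.mul x y = x * y) ∧
  R.one = 1 ∧
  (∀ {i : ℤ} {a : V}, a ∈ L.gr i → sGen L a ∈ R.gr i) ∧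
  (∀ a : V, R.d (sGen L a) = sGen L (L.d a)) ∧
  (∀ a b : V, R.br (sGen L a) (sGen L b) = sGen L (L.br a b))

/-- `S` is the graded semidirect product differential graded Lie algebra `L ⋊ L`. -/
def IsSemidirect (L : DGLAOn k V) (S : DGLAOn k (V × V)) : Prop :=
  (∀ n : ℤ, S.gr n = (L.gr n).prod (L.gr n)) ∧
  (∀ z : V × V, S.d z = (L.d z.1, L.d z.2)) ∧
  (∀ {i j : ℤ} {x₁ x₂ y₁ y₂ : V}, x₁ ∈ L.gr i → x₂ ∈ L.gr i → y₁ ∈ L.gr j → y₂ ∈ L.gr j →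
    S.br (x₁, x₂) (y₁, y₂) =
      (L.br x₂ y₁ - ((-1 : k) ^ (i * j)) • L.br y₂ x₁, L.br x₂ y₂))

end Lie

section Smash

variable {M : Type u} [AddCommGroup M] [Module k M]

/-- The generators `1#(ab) - a#b - (-1)^{|a||b|} b#a` of the ideal defining `A^E`
inside the smash product `A # U(A)`. -/
def smashGens (P : DGPAOn k M) : Set (M ⊗[k] ULie P.toLie) :=
  {z | ∃ (i j : ℤ) (a b : M), a ∈ P.gr i ∧ b ∈ P.gr j ∧
    z = P.one ⊗ₜ[k] uGen P.toLie (P.mul a b) - a ⊗ₜ[k] uGen P.toLie b -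
        ((-1 : k) ^ (i * j)) • (b ⊗ₜ[k] uGen P.toLie a)}

/-- The two-sided ideal generated by a set `T` in a differential graded algebra `S`. -/
def idealGen {N : Type u} [AddCommGroup N] [Module k N] (S : DGAOn k N) (T : Set N) :
    Submodule k N :=
  sInf {I : Submodule k N | T ⊆ I ∧ ∀ x ∈ I, ∀ y : N, S.mul x y ∈ I ∧ S.mul y x ∈ I}

/-- `S` is the smash product differential graded algebra `A # U(A)`. -/
def IsSmash (P : DGPAOn k M) (EU : DGAOn k (ULie P.toLie))
    (S : DGAOn k (M ⊗[k] ULie P.toLie)) : Prop :=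
  S.one = P.one ⊗ₜ[k] (1 : ULie P.toLie) ∧
  (∀ a b : M, S.mul (a ⊗ₜ[k] (1 : ULie P.toLie)) (b ⊗ₜ[k] (1 : ULie P.toLie)) =
      P.mul a b ⊗ₜ[k] (1 : ULie P.toLie)) ∧
  (∀ u v : ULie P.toLie, S.mul (P.one ⊗ₜ[k] u) (P.one ⊗ₜ[k] v) = P.one ⊗ₜ[k] (u * v)) ∧
  (∀ (a : M) (u : ULie P.toLie), S.mul (a ⊗ₜ[k] (1 : ULie P.toLie)) (P.one ⊗ₜ[k] u) =
      a ⊗ₜ[k] u) ∧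
  (∀ {i j : ℤ} {c b : M}, c ∈ P.gr i → b ∈ P.gr j →
    S.mul (P.one ⊗ₜ[k] uGen P.toLie c) (b ⊗ₜ[k] (1 : ULie P.toLie)) =
      P.br c b ⊗ₜ[k] (1 : ULie P.toLie) + ((-1 : k) ^ (i * j)) • (b ⊗ₜ[k] uGen P.toLie c)) ∧
  (∀ {i j : ℤ} {a : M} {u : ULie P.toLie}, a ∈ P.gr i → u ∈ EU.gr j →
      a ⊗ₜ[k] u ∈ S.gr (i + j)) ∧
  (∀ {i : ℤ} {a : M}, a ∈ P.gr i → ∀ u : ULie P.toLie,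
    S.d (a ⊗ₜ[k] u) = P.d a ⊗ₜ[k] u + ((-1 : k) ^ i) • (a ⊗ₜ[k] EU.d u))

/-- `R` is the quotient differential graded algebra structure of `S` by the ideal `I`. -/
def IsQuotDGA {N : Type u} [AddCommGroup N] [Module k N] (S : DGAOn k N)
    (I : Submodule k N) (R : DGAOn k (N ⧸ I)) : Prop :=
  (∀ n : ℤ, R.gr n = Submodule.map I.mkQ (S.gr n)) ∧
  R.one = I.mkQ S.one ∧
  (∀ x y : N, R.mul (I.mkQ x) (I.mkQ y) = I.mkQ (S.mul x y)) ∧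
  (∀ x : N, R.d (I.mkQ x) = I.mkQ (S.d x))

end Smash

section Op

variable {M N : Type u} [AddCommGroup M] [Module k M] [AddCommGroup N] [Module k N]

/-- `P'` is the opposite differential graded Poisson algebra of `P` (the product is
unchanged by graded commutativity, the bracket is negated). -/
def IsOpDGPA (P P' : DGPAOn k M) : Prop :=
  P'.gr = P.gr ∧ (∀ x y : M, P'.mul x y = P.mul x y) ∧ P'.one = P.one ∧ P'.d = P.d ∧
  (∀ x y : M, P'.br x y = - P.br x y)

/-- `E'` is the opposite differential graded algebra of `E` (with the Koszul sign). -/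
def IsOpDGA (E E' : DGAOn k N) : Prop :=
  E'.gr = E.gr ∧ E'.one = E.one ∧ E'.d = E.d ∧
  (∀ {i j : ℤ} {x y : N}, x ∈ E.gr i → y ∈ E.gr j →
    E'.mul x y = ((-1 : k) ^ (i * j)) • E.mul y x)

end Op

section UEnv

variable {M N : Type u} [AddCommGroup M] [Module k M] [AddCommGroup N] [Module k N]

/-- A pair `(f, g)` where `f : A → D` is a differential graded algebra map and
`g : A → D_L` is a differential graded Lie algebra map (into the graded commutator Lie
structure of `D`), satisfying the two compatibility conditions of the universal property
of the universal enveloping algebra of a differential graded Poisson algebra. -/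
def UEPair (P : DGPAOn k M) (D : DGAOn k N) (f g : M →ₗ[k] N) : Prop :=
  (∀ {n : ℤ} {x : M}, x ∈ P.gr n → f x ∈ D.gr n) ∧
  (∀ {n : ℤ} {x : M}, x ∈ P.gr n → g x ∈ D.gr n) ∧
  (∀ a b : M, f (P.mul a b) = D.mul (f a) (f b)) ∧
  f P.one = D.one ∧
  (∀ a : M, f (P.d a) = D.d (f a)) ∧
  (∀ a : M, g (P.d a) = D.d (g a)) ∧
  (∀ {i j : ℤ} {a b : M}, a ∈ P.gr i → b ∈ P.gr j →
    g (P.br a b) = D.mul (g a) (g b) - ((-1 : k) ^ (i * j)) • D.mul (g b) (g a)) ∧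
  (∀ {i j : ℤ} {a b : M}, a ∈ P.gr i → b ∈ P.gr j →
    f (P.br a b) = D.mul (g a) (f b) - ((-1 : k) ^ (i * j)) • D.mul (f b) (g a)) ∧
  (∀ {i j : ℤ} {a b : M}, a ∈ P.gr i → b ∈ P.gr j →
    g (P.mul a b) = D.mul (f a) (g b) + ((-1 : k) ^ (i * j)) • D.mul (f b) (g a))

/-- `(E, α, β)` is a universal enveloping algebra of the differential graded Poisson
algebra `P`. -/
def IsUEnv (P : DGPAOn k M) (E : DGAOn k N) (α β : M →ₗ[k] N) : Prop :=
  UEPair P E α β ∧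
  ∀ (D' : Type u) [AddCommGroup D'] [Module k D'] (D : DGAOn k D') (f g : M →ₗ[k] D'),
    UEPair P D f g →
    ∃! φ : N →ₗ[k] D',
      IsDGAHom E D φ ∧ (∀ a : M, φ (α a) = f a) ∧ (∀ a : M, φ (β a) = g a)

end UEnv

section IdealsQuotients

variable {M : Type u} [AddCommGroup M] [Module k M]

/-- `B` is a differential graded Poisson ideal of `P`. -/
def IsDGPIdeal (P : DGPAOn k M) (B : Submodule k M) : Prop :=
  (B = ⨆ n : ℤ, B ⊓ P.gr n) ∧
  (∀ x ∈ B, P.d x ∈ B) ∧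
  (∀ x ∈ B, ∀ a : M, P.mul x a ∈ B) ∧
  (∀ x ∈ B, ∀ a : M, P.mul a x ∈ B) ∧
  (∀ x ∈ B, ∀ a : M, P.br a x ∈ B)

/-- `B` is a differential graded Poisson subalgebra of `P`. -/
def IsDGPSubalg (P : DGPAOn k M) (B : Submodule k M) : Prop :=
  (B = ⨆ n : ℤ, B ⊓ P.gr n) ∧ P.one ∈ B ∧
  (∀ x ∈ B, ∀ y ∈ B, P.mul x y ∈ B) ∧
  (∀ x ∈ B, P.d x ∈ B) ∧
  (∀ x ∈ B, ∀ y ∈ B, P.br x y ∈ B)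

/-- `R` is the quotient differential graded Poisson algebra structure on `M ⧸ B`. -/
def IsQuotDGPA (P : DGPAOn k M) (B : Submodule k M) (R : DGPAOn k (M ⧸ B)) : Prop :=
  (∀ n : ℤ, R.gr n = Submodule.map B.mkQ (P.gr n)) ∧
  R.one = B.mkQ P.one ∧
  (∀ x y : M, R.mul (B.mkQ x) (B.mkQ y) = B.mkQ (P.mul x y)) ∧
  (∀ x : M, R.d (B.mkQ x) = B.mkQ (P.d x)) ∧
  (∀ x y : M, R.br (B.mkQ x) (B.mkQ y) = B.mkQ (P.br x y))

/-- `S` is the differential graded Poisson algebra structure induced on a differential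
graded Poisson subalgebra `B` of `P`. -/
def IsSubDGPA (P : DGPAOn k M) (B : Submodule k M) (S : DGPAOn k B) : Prop :=
  (∀ n : ℤ, S.gr n = Submodule.comap B.subtype (P.gr n)) ∧
  ((S.one : M) = P.one) ∧
  (∀ x y : B, (S.mul x y : M) = P.mul (x : M) (y : M)) ∧
  (∀ x : B, (S.d x : M) = P.d (x : M)) ∧
  (∀ x y : B, (S.br x y : M) = P.br (x : M) (y : M))

/-- The cocycles `ker d` of a differential graded Poisson algebra. -/
def Cocycles (P : DGPAOn k M) : Submodule k M := LinearMap.ker P.d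

/-- The coboundaries `im d`, viewed inside the cocycles. -/
def CobIn (P : DGPAOn k M) : Submodule k (Cocycles P) :=
  Submodule.comap (Cocycles P).subtype (LinearMap.range P.d)

/-- The cohomology `H(A) = ker d / im d` of a differential graded Poisson algebra. -/
abbrev Cohom (P : DGPAOn k M) : Type u := Cocycles P ⧸ CobIn P

/-- The class map `ker d → H(A)`. -/
def cohCls (P : DGPAOn k M) : Cocycles P →ₗ[k] Cohom P := (CobIn P).mkQ

/-- `R` is the graded Poisson algebra structure on the cohomology of `P` (a differential
graded Poisson algebra structure with zero differential, with the induced grading,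
product and bracket). -/
def IsCohomDGPA (P : DGPAOn k M) (R : DGPAOn k (Cohom P)) : Prop :=
  R.d = 0 ∧
  (∀ n : ℤ, R.gr n =
    Submodule.map (cohCls P) (Submodule.comap (Cocycles P).subtype (P.gr n))) ∧
  (∀ h : P.one ∈ Cocycles P, R.one = cohCls P ⟨P.one, h⟩) ∧
  (∀ (a b : Cocycles P) (h : P.mul (a : M) (b : M) ∈ Cocycles P),
    R.mul (cohCls P a) (cohCls P b) = cohCls P ⟨P.mul (a : M) (b : M), h⟩) ∧
  (∀ (a b : Cocycles P) (h : P.br (a : M) (b : M) ∈ Cocycles P),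
    R.br (cohCls P a) (cohCls P b) = cohCls P ⟨P.br (a : M) (b : M), h⟩)

end IdealsQuotients

end Defs

section ModuleDefs

variable {k : Type u} [Field k]

/-- A left differential graded module structure on `X` over the differential graded
algebra `E`. -/
structure DGModOn {N : Type u} [AddCommGroup N] [Module k N] (E : DGAOn k N)
    (X : Type u) [AddCommGroup X] [Module k X] where
  grm : ℤ → Submodule k X
  decomp : DirectSum.Decomposition grm
  act : N →ₗ[k] X →ₗ[k] X
  act_one : ∀ x : X, act E.one x = x
  act_mul : ∀ (r s : N) (x : X), act (E.mul r s) x = act r (act s x)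
  act_mem : ∀ {i j : ℤ} {r : N} {x : X}, r ∈ E.gr i → x ∈ grm j → act r x ∈ grm (i + j)
  dm : X →ₗ[k] X
  dm_mem : ∀ {i : ℤ} {x : X}, x ∈ grm i → dm x ∈ grm (i + 1)
  dm_sq : ∀ x : X, dm (dm x) = 0
  dm_act : ∀ {i : ℤ} {r : N}, r ∈ E.gr i → ∀ x : X,
    dm (act r x) = act (E.d r) x + ((-1 : k) ^ i) • act r (dm x)

/-- A left differential graded Poisson module structure on `X` over the differential
graded Poisson algebra `P`. -/
structure DGPModOn {M : Type u} [AddCommGroup M] [Module k M] (P : DGPAOn k M)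
    (X : Type u) [AddCommGroup X] [Module k X] where
  grm : ℤ → Submodule k X
  decomp : DirectSum.Decomposition grm
  act : M →ₗ[k] X →ₗ[k] X
  act_one : ∀ x : X, act P.one x = x
  act_mul : ∀ (a b : M) (x : X), act (P.mul a b) x = act a (act b x)
  act_mem : ∀ {i j : ℤ} {a : M} {x : X}, a ∈ P.gr i → x ∈ grm j → act a x ∈ grm (i + j)
  dm : X →ₗ[k] X
  dm_mem : ∀ {i : ℤ} {x : X}, x ∈ grm i → dm x ∈ grm (i + 1)
  dm_sq : ∀ x : X, dm (dm x) = 0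
  dm_act : ∀ {i : ℤ} {a : M}, a ∈ P.gr i → ∀ x : X,
    dm (act a x) = act (P.d a) x + ((-1 : k) ^ i) • act a (dm x)
  bact : M →ₗ[k] X →ₗ[k] X
  bact_mem : ∀ {i j : ℤ} {a : M} {x : X}, a ∈ P.gr i → x ∈ grm j → bact a x ∈ grm (i + j)
  bact_amod : ∀ {i j : ℤ} {a b : M}, a ∈ P.gr i → b ∈ P.gr j → ∀ x : X,
    bact a (act b x) = act (P.br a b) x + ((-1 : k) ^ (i * j)) • act b (bact a x)
  bact_mulact : ∀ {i j : ℤ} {a b : M}, a ∈ P.gr i → b ∈ P.gr j → ∀ x : X,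
    bact (P.mul a b) x = act a (bact b x) + ((-1 : k) ^ (i * j)) • act b (bact a x)
  bact_jacobi : ∀ {i j : ℤ} {a b : M}, a ∈ P.gr i → b ∈ P.gr j → ∀ x : X,
    bact a (bact b x) = bact (P.br a b) x + ((-1 : k) ^ (i * j)) • bact b (bact a x)
  dm_bact : ∀ {i : ℤ} {a : M}, a ∈ P.gr i → ∀ x : X,
    dm (bact a x) = bact (P.d a) x + ((-1 : k) ^ i) • bact a (dm x)

/-- A morphism of left differential graded modules. -/
def IsDGModHom {N X Y : Type u} [AddCommGroup N] [Module k N]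
    [AddCommGroup X] [Module k X] [AddCommGroup Y] [Module k Y]
    {E : DGAOn k N} (W : DGModOn E X) (W' : DGModOn E Y) (f : X →ₗ[k] Y) : Prop :=
  (∀ {n : ℤ} {x : X}, x ∈ W.grm n → f x ∈ W'.grm n) ∧
  (∀ x : X, f (W.dm x) = W'.dm (f x)) ∧
  (∀ (r : N) (x : X), f (W.act r x) = W'.act r (f x))

/-- A morphism of left differential graded Poisson modules. -/
def IsDGPModHom {M X Y : Type u} [AddCommGroup M] [Module k M]
    [AddCommGroup X] [Module k X] [AddCommGroup Y] [Module k Y]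
    {P : DGPAOn k M} (V : DGPModOn P X) (V' : DGPModOn P Y) (f : X →ₗ[k] Y) : Prop :=
  (∀ {n : ℤ} {x : X}, x ∈ V.grm n → f x ∈ V'.grm n) ∧
  (∀ x : X, f (V.dm x) = V'.dm (f x)) ∧
  (∀ (a : M) (x : X), f (V.act a x) = V'.act a (f x)) ∧
  (∀ (a : M) (x : X), f (V.bact a x) = V'.bact a (f x))

/-- The correspondence between a differential graded Poisson module structure over `P`
and a differential graded module structure over `A^e` on the same space. -/
def ModCorr {M X : Type u} [AddCommGroup M] [Module k M] [AddCommGroup X] [Module k X]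
    {P : DGPAOn k M} {E : DGAOn k (Env P)}
    (V : DGPModOn P X) (W : DGModOn E X) : Prop :=
  W.grm = V.grm ∧ W.dm = V.dm ∧
  (∀ (a : M) (x : X), W.act (mgen P a) x = V.act a x) ∧
  (∀ (a : M) (x : X), W.act (hgen P a) x = V.bact a x)

end ModuleDefs

/-!
The defining relations of `A^e` are exactly the axioms satisfied by the operators `a · -` and
`{a, -}` on a Poisson module, so these operators define a representation `ρ` of `A^e`. That `ρ`
preserves degrees and that `δ * ρ r = ρ (d r) + (-1)^|r| ρ r * δ` are conditions on homogeneous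
`r` closed under linear combinations and products, and they hold on the generators `m_a`, `h_a`.
The elements satisfying them therefore form graded pieces that together span `A^e`; being contained
in the pieces of the given grading of `A^e`, they exhaust it.
-/

section Graded

theorem eq_of_le_of_iSupIndep {ι α : Type*} [CompleteLattice α] [IsModularLattice α]
    {s t : ι → α} (hst : s ≤ t) (ht : iSupIndep t) (hsup : ⨆ i, t i ≤ ⨆ i, s i) : s = t := by
  refine le_antisymm hst fun i => ?_
  have hdisj : (⨆ j, ⨆ _ : j ≠ i, s j) ⊓ t i = ⊥ :=
    ((ht i).mono_right (iSup₂_mono fun j _ => hst j)).symm.eq_bot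
  calc
    t i ≤ (s i ⊔ ⨆ j, ⨆ _ : j ≠ i, s j) ⊓ t i :=
      le_inf ((le_iSup t i).trans (hsup.trans (iSup_split_single s i).le)) le_rfl
    _ = s i ⊔ (⨆ j, ⨆ _ : j ≠ i, s j) ⊓ t i := sup_inf_assoc_of_le _ (hst i)
    _ = s i := by rw [hdisj, sup_bot_eq]

theorem iSup_eq_top_of_adjoin_eq_top {ι K R : Type*} [AddMonoid ι] [CommSemiring K] [Semiring R]
    [Algebra K R] {ℬ : ι → Submodule K R} [SetLike.GradedMonoid ℬ] {S : Set R}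
    (hS : Algebra.adjoin K S = ⊤) (hSℬ : ∀ s ∈ S, ∃ i, s ∈ ℬ i) : ⨆ i, ℬ i = ⊤ := by
  classical
  have hle : Algebra.adjoin K S ≤ (DirectSum.coeAlgHom ℬ).range :=
    Algebra.adjoin_le fun s hs => by
      obtain ⟨i, hi⟩ := hSℬ s hs
      exact ⟨DirectSum.of (fun i => ℬ i) i ⟨s, hi⟩, DirectSum.coeAlgHom_of ℬ i ⟨s, hi⟩⟩
  rw [Submodule.iSup_eq_toSubmodule_range, top_le_iff.mp (hS.ge.trans hle),
    Algebra.top_toSubmodule]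

variable {ι K R : Type*} [DecidableEq ι] [AddMonoid ι] [CommRing K] [Ring R] [Algebra K R]
  {𝒜 ℬ : ι → Submodule K R} {S : Set R}

theorem eq_of_le_of_adjoin_eq_top [DirectSum.Decomposition 𝒜] [SetLike.GradedMonoid ℬ]
    (hle : ℬ ≤ 𝒜) (hS : Algebra.adjoin K S = ⊤) (hSℬ : ∀ s ∈ S, ∃ i, s ∈ ℬ i) : ℬ = 𝒜 :=
  eq_of_le_of_iSupIndep hle (DirectSum.Decomposition.isInternal 𝒜).submodule_iSupIndep
    ((iSup_eq_top_of_adjoin_eq_top hS hSℬ).symm ▸ le_top)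

theorem map_mem_of_adjoin_eq_top {T : Type*} [Semiring T] [Algebra K T] {𝒞 : ι → Submodule K T}
    [DirectSum.Decomposition 𝒜] [SetLike.GradedMonoid 𝒜] [SetLike.GradedMonoid 𝒞]
    (ρ : R →ₐ[K] T) (hS : Algebra.adjoin K S = ⊤) (hSρ : ∀ s ∈ S, ∃ i, s ∈ 𝒜 i ∧ ρ s ∈ 𝒞 i)
    {i : ι} {r : R} (hr : r ∈ 𝒜 i) : ρ r ∈ 𝒞 i := by
  let ℬ : ι → Submodule K R := fun i => 𝒜 i ⊓ (𝒞 i).comap ρ.toLinearMap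
  have : SetLike.GradedMonoid ℬ :=
    { one_mem := ⟨SetLike.one_mem_graded 𝒜, by
        simpa using SetLike.one_mem_graded 𝒞⟩
      mul_mem := fun _ _ _ _ hx hy => ⟨SetLike.mul_mem_graded hx.1 hy.1, by
        simpa using SetLike.mul_mem_graded (A := 𝒞) hx.2 hy.2⟩ }
  have hℬ : ℬ = 𝒜 := eq_of_le_of_adjoin_eq_top (fun _ => inf_le_left) hS hSρ
  exact (hℬ.symm ▸ hr : r ∈ ℬ i).2

end Graded

section DegreeEnd

variable {ι K X : Type*} [CommSemiring K] [AddCommMonoid X] [Module K X]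

/-- The `K`-linear endomorphisms of `X` that are homogeneous of degree `i` for the family
`𝒢` of homogeneous components of `X`. -/
def degreeEnd [Add ι] (𝒢 : ι → Submodule K X) (i : ι) : Submodule K (Module.End K X) :=
  ⨅ j, Submodule.compatibleMaps (𝒢 j) (𝒢 (i + j))

theorem mem_degreeEnd [Add ι] {𝒢 : ι → Submodule K X} {i : ι} {f : Module.End K X} :
    f ∈ degreeEnd 𝒢 i ↔ ∀ j, ∀ x ∈ 𝒢 j, f x ∈ 𝒢 (i + j) := by
  simp only [degreeEnd, Submodule.mem_iInf]
  rfl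

instance degreeEnd.gradedMonoid [AddMonoid ι] (𝒢 : ι → Submodule K X) :
    SetLike.GradedMonoid (degreeEnd 𝒢) where
  one_mem := mem_degreeEnd.mpr fun j x hx => by simpa using hx
  mul_mem i j f g hf hg := mem_degreeEnd.mpr fun l x hx => by
    rw [add_assoc]
    exact mem_degreeEnd.mp hf _ _ (mem_degreeEnd.mp hg _ _ hx)

end DegreeEnd

section Leibniz

variable {k : Type u} [Field k]

theorem DGAOn.d_one {N : Type u} [AddCommGroup N] [Module k N] (E : DGAOn k N) :
    E.d E.one = 0 := by
  simpa [E.one_mul, E.mul_one] using E.d_mul E.one_mem E.one_mem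

variable {R X : Type u} [Ring R] [Algebra k R] [AddCommGroup X] [Module k X] {E : DGAOn k R}

theorem DGAOn.gradedMonoid_gr (hone : E.one = 1) (hmul : ∀ x y, E.mul x y = x * y) :
    SetLike.GradedMonoid E.gr where
  one_mem := hone ▸ E.one_mem
  mul_mem _ _ x y hx hy := hmul x y ▸ E.mul_mem hx hy

/-- The degree `i` elements `r` of a differential graded algebra whose action `ρ r` on `X`
satisfies the graded Leibniz rule with respect to `δ`. The rule is encoded as the equality of two
linear maps `R → End X`, so that it visibly cuts out a submodule. -/
def leibnizElements (E : DGAOn k R) (ρ : R →ₐ[k] Module.End k X) (δ : Module.End k X) (i : ℤ) :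
    Submodule k R :=
  E.gr i ⊓ LinearMap.eqLocus (LinearMap.mulLeft k δ ∘ₗ ρ.toLinearMap)
    (ρ.toLinearMap ∘ₗ E.d + ((-1 : k) ^ i) • LinearMap.mulRight k δ ∘ₗ ρ.toLinearMap)

variable {ρ : R →ₐ[k] Module.End k X} {δ : Module.End k X}

theorem mem_leibnizElements {i : ℤ} {r : R} :
    r ∈ leibnizElements E ρ δ i ↔
      r ∈ E.gr i ∧ δ * ρ r = ρ (E.d r) + ((-1 : k) ^ i) • (ρ r * δ) :=
  Iff.rfl

theorem one_mem_leibnizElements (hone : E.one = 1) : 1 ∈ leibnizElements E ρ δ 0 := by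
  refine mem_leibnizElements.mpr ⟨hone ▸ E.one_mem, ?_⟩
  have hd : E.d 1 = 0 := hone ▸ E.d_one
  simp [hd]

theorem mul_mem_leibnizElements (hmul : ∀ x y, E.mul x y = x * y) {i j : ℤ} {r s : R}
    (hr : r ∈ leibnizElements E ρ δ i) (hs : s ∈ leibnizElements E ρ δ j) :
    r * s ∈ leibnizElements E ρ δ (i + j) := by
  obtain ⟨hri, hrδ⟩ := mem_leibnizElements.mp hr
  obtain ⟨hsj, hsδ⟩ := mem_leibnizElements.mp hs
  have hd : E.d (r * s) = E.d r * s + ((-1 : k) ^ i) • (r * E.d s) := by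
    simpa only [hmul] using E.d_mul hri hsj
  have hsign : (-1 : k) ^ (i + j) = (-1) ^ i * (-1) ^ j :=
    zpow_add₀ (neg_ne_zero.mpr one_ne_zero) i j
  refine mem_leibnizElements.mpr ⟨hmul r s ▸ E.mul_mem hri hsj, ?_⟩
  calc
    δ * ρ (r * s) = δ * ρ r * ρ s := by rw [map_mul, mul_assoc]
    _ = ρ (E.d r) * ρ s + ((-1 : k) ^ i) • (ρ r * (δ * ρ s)) := by
      rw [hrδ, add_mul, smul_mul_assoc, mul_assoc]
    _ = ρ (E.d r) * ρ s + ((-1 : k) ^ i) • (ρ r * ρ (E.d s)) +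
          ((-1 : k) ^ (i + j)) • (ρ r * ρ s * δ) := by
      rw [hsδ, mul_add, smul_add, mul_smul_comm, smul_smul, hsign, mul_assoc, add_assoc]
    _ = ρ (E.d (r * s)) + ((-1 : k) ^ (i + j)) • (ρ (r * s) * δ) := by
      rw [hd, map_add, map_smul, map_mul, map_mul, map_mul]

theorem leibniz_of_adjoin_eq_top (hone : E.one = 1) (hmul : ∀ x y, E.mul x y = x * y) {S : Set R}
    (hS : Algebra.adjoin k S = ⊤) (hSδ : ∀ s ∈ S, ∃ i, s ∈ leibnizElements E ρ δ i)
    {i : ℤ} {r : R} (hr : r ∈ E.gr i) :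
    δ * ρ r = ρ (E.d r) + ((-1 : k) ^ i) • (ρ r * δ) := by
  let := E.decomp
  have : SetLike.GradedMonoid (leibnizElements E ρ δ) :=
    { one_mem := one_mem_leibnizElements hone
      mul_mem := fun _ _ _ _ => mul_mem_leibnizElements hmul }
  have hgr : leibnizElements E ρ δ = E.gr :=
    eq_of_le_of_adjoin_eq_top (fun _ => inf_le_left) hS hSδ
  exact (mem_leibnizElements.mp (hgr ▸ hr)).2

end Leibniz

section EnvAction

variable {k : Type u} [Field k] {M X : Type u} [AddCommGroup M] [Module k M]
  [AddCommGroup X] [Module k X] {P : DGPAOn k M}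

/-- The generators `m_a` and `h_a` of `A^e` with `a` homogeneous. -/
def homogeneousGenerators (P : DGPAOn k M) : Set (Env P) :=
  {u | ∃ i, ∃ a ∈ P.gr i, u = mgen P a ∨ u = hgen P a}

theorem mkAlgHom_ι (z : M × M) :
    RingQuot.mkAlgHom k (EnvRel P) (TensorAlgebra.ι k z) = mgen P z.1 + hgen P z.2 := by
  simp [mgen, hgen, ← map_add]

theorem adjoin_homogeneousGenerators (P : DGPAOn k M) :
    Algebra.adjoin k (homogeneousGenerators P) = ⊤ := by
  let := P.decomp
  set B := Algebra.adjoin k (homogeneousGenerators P)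
  have map_mem (f : M →ₗ[k] Env P) (hf : ∀ i, ∀ a ∈ P.gr i, f a ∈ homogeneousGenerators P)
      (a : M) : f a ∈ B := by
    induction a using DirectSum.Decomposition.inductionOn P.gr with
    | zero => exact map_zero f ▸ zero_mem B
    | homogeneous a => exact Algebra.subset_adjoin (hf _ a a.2)
    | add a b ha hb => exact map_add f a b ▸ add_mem ha hb
  have hm := map_mem (mgen P) fun i a ha => ⟨i, a, ha, Or.inl rfl⟩
  have hh := map_mem (hgen P) fun i a ha => ⟨i, a, ha, Or.inr rfl⟩
  rw [← top_le_iff, ← (AlgHom.range_eq_top _).mpr (RingQuot.mkAlgHom_surjective k (EnvRel P)),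
    ← Algebra.map_top, ← TensorAlgebra.adjoin_range_ι, AlgHom.map_adjoin, Algebra.adjoin_le_iff]
  rintro _ ⟨_, ⟨z, rfl⟩, rfl⟩
  exact mkAlgHom_ι (P := P) z ▸ add_mem (hm z.1) (hh z.2)

namespace DGPModOn

/-- The action of the free algebra on the symbols `m_a` and `h_a` on a Poisson module, in which
`m_a` acts as `a · -` and `h_a` as `{a, -}`. -/
def tensorAction (V : DGPModOn P X) : TensorAlgebra k (M × M) →ₐ[k] Module.End k X :=
  TensorAlgebra.lift k (LinearMap.coprod (V.act : M →ₗ[k] Module.End k X) V.bact)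

theorem tensorAction_ι_apply (V : DGPModOn P X) (a b : M) (x : X) :
    V.tensorAction (TensorAlgebra.ι k (a, b)) x = V.act a x + V.bact b x := by
  simp [tensorAction]

theorem tensorAction_eq_of_envRel (V : DGPModOn P X) ⦃s t : TensorAlgebra k (M × M)⦄
    (h : EnvRel P s t) : V.tensorAction s = V.tensorAction t := by
  ext x
  cases h with
  | relone => simp [tensorAction_ι_apply, V.act_one]
  | relmul a b => simp [tensorAction_ι_apply, V.act_mul]
  | relhmul ha hb => simp [tensorAction_ι_apply, V.bact_mulact ha hb]
  | relmbr ha hb => simp [tensorAction_ι_apply, V.bact_amod ha hb]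
  | relhbr ha hb => simp [tensorAction_ι_apply, V.bact_jacobi ha hb]

/-- The action of `A^e` on a Poisson module given by `m_a · x = a x` and `h_a · x = {a, x}`. -/
def envAction (V : DGPModOn P X) : Env P →ₐ[k] Module.End k X :=
  RingQuot.liftAlgHom k ⟨V.tensorAction, V.tensorAction_eq_of_envRel⟩

theorem envAction_mgen (V : DGPModOn P X) (a : M) : V.envAction (mgen P a) = V.act a := by
  ext x
  simp [envAction, mgen, tensorAction_ι_apply]

theorem envAction_hgen (V : DGPModOn P X) (a : M) : V.envAction (hgen P a) = V.bact a := by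
  ext x
  simp [envAction, hgen, tensorAction_ι_apply]

variable {E : DGAOn k (Env P)}

theorem envAction_mem_degreeEnd (V : DGPModOn P X) (hE : IsEnvDGA P E) {i : ℤ} {r : Env P}
    (hr : r ∈ E.gr i) :
    V.envAction r ∈ degreeEnd V.grm i := by
  obtain ⟨hmul, hone, hmgen, hhgen, -, -⟩ := hE
  let := E.decomp
  have := DGAOn.gradedMonoid_gr hone hmul
  refine map_mem_of_adjoin_eq_top V.envAction (adjoin_homogeneousGenerators P) ?_ hr
  rintro _ ⟨i, a, ha, rfl | rfl⟩
  · exact ⟨i, hmgen ha, V.envAction_mgen a ▸ mem_degreeEnd.mpr fun _ _ => V.act_mem ha⟩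
  · exact ⟨i, hhgen ha, V.envAction_hgen a ▸ mem_degreeEnd.mpr fun _ _ => V.bact_mem ha⟩

theorem dm_mul_envAction (V : DGPModOn P X) (hE : IsEnvDGA P E) {i : ℤ} {r : Env P}
    (hr : r ∈ E.gr i) :
    V.dm * V.envAction r = V.envAction (E.d r) + ((-1 : k) ^ i) • (V.envAction r * V.dm) := by
  obtain ⟨hmul, hone, hmgen, hhgen, hdm, hdh⟩ := hE
  refine leibniz_of_adjoin_eq_top hone hmul (adjoin_homogeneousGenerators P) ?_ hr
  rintro _ ⟨i, a, ha, rfl | rfl⟩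
  · refine ⟨i, mem_leibnizElements.mpr ⟨hmgen ha, ?_⟩⟩
    rw [hdm, envAction_mgen, envAction_mgen]
    exact LinearMap.ext (V.dm_act ha)
  · refine ⟨i, mem_leibnizElements.mpr ⟨hhgen ha, ?_⟩⟩
    rw [hdh, envAction_hgen, envAction_hgen]
    exact LinearMap.ext (V.dm_bact ha)

end DGPModOn

end EnvAction

/-- every left differential graded Poisson module over `A` becomes a left
differential graded module over `A^e` under `m_a · x = a x` and `h_a · x = {a,x}`. -/
theorem stmt_10 (k : Type u) [Field k] (M X : Type u)
    [AddCommGroup M] [Module k M] [AddCommGroup X] [Module k X]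
    (P : DGPAOn k M) (E : DGAOn k (Env P)) (hE : IsEnvDGA P E)
    (V : DGPModOn P X) :
    ∃ W : DGModOn E X, ModCorr V W := by
  have ⟨hmul, hone, _⟩ := hE
  let W : DGModOn E X :=
    { grm := V.grm
      decomp := V.decomp
      act := V.envAction.toLinearMap
      act_one := fun x => by simp [hone]
      act_mul := fun r s x => by simp [hmul]
      act_mem := fun hr hx => mem_degreeEnd.mp (V.envAction_mem_degreeEnd hE hr) _ _ hx
      dm := V.dm
      dm_mem := V.dm_mem
      dm_sq := V.dm_sq
      dm_act := fun hr => LinearMap.congr_fun (V.dm_mul_envAction hE hr) }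
  exact ⟨W, rfl, rfl, fun a => LinearMap.congr_fun (V.envAction_mgen a),
    fun a => LinearMap.congr_fun (V.envAction_hgen a)⟩

end DGPaper

end
end

section
/- Let (A, {,}_A, d) be a differential graded Poisson algebra over a field k and (M, ∂) a left differential graded module over the differential graded algebra A^e. Then M is a left differential graded Poisson module over A under a ∗ x := m_a x and {a,x}_M := h_a x for homogeneous a ∈ A, x ∈ M. -/
open scoped TensorProduct

noncomputable section

namespace DGPaper

universe u

section UniversalPair

variable {k : Type u} [Field k] {M N X : Type u} [AddCommGroup M] [Module k M]
  [AddCommGroup N] [Module k N] [AddCommGroup X] [Module k X]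

theorem DGModOn.act_mul_add_smul_mul {D : DGAOn k N} (W : DGModOn D X) (r s r' s' : N) (c : k)
    (x : X) :
    W.act (D.mul r s + c • D.mul r' s') x =
      W.act r (W.act s x) + c • W.act r' (W.act s' x) := by
  simp only [map_add, map_smul, LinearMap.add_apply, LinearMap.smul_apply, W.act_mul]

theorem DGModOn.act_act_eq_act_commutator_add {D : DGAOn k N} (W : DGModOn D X) (r s : N) (c : k)
    (x : X) :
    W.act r (W.act s x) =
      W.act (D.mul r s - c • D.mul s r) x + c • W.act s (W.act r x) := by
  simp only [map_sub, map_smul, LinearMap.sub_apply, LinearMap.smul_apply, W.act_mul,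
    sub_add_cancel]

/-- Restriction of scalars: each Poisson module axiom is one of the identities of the pair
`(f, g)`, read through the action of `D` on `X`. -/
theorem stmt_11_general {P : DGPAOn k M} {D : DGAOn k N} {f g : M →ₗ[k] N}
    (hfg : UEPair P D f g) (W : DGModOn D X) :
    ∃ V : DGPModOn P X, W.grm = V.grm ∧ W.dm = V.dm ∧
      (∀ (a : M) (x : X), W.act (f a) x = V.act a x) ∧
      (∀ (a : M) (x : X), W.act (g a) x = V.bact a x) := by
  obtain ⟨f_mem, g_mem, f_mul, f_one, f_d, g_d, g_br, f_br, g_mul⟩ := hfg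
  let V : DGPModOn P X :=
    { grm := W.grm
      decomp := W.decomp
      act := W.act ∘ₗ f
      act_one x := by rw [LinearMap.comp_apply, f_one, W.act_one]
      act_mul a b x := by simp only [LinearMap.comp_apply, f_mul, W.act_mul]
      act_mem ha hx := W.act_mem (f_mem ha) hx
      dm := W.dm
      dm_mem := W.dm_mem
      dm_sq := W.dm_sq
      dm_act ha x := by simp only [LinearMap.comp_apply, W.dm_act (f_mem ha), f_d]
      bact := W.act ∘ₗ g
      bact_mem ha hx := W.act_mem (g_mem ha) hx
      bact_amod ha hb x := by
        simpa only [LinearMap.comp_apply, f_br ha hb] using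
          W.act_act_eq_act_commutator_add _ _ _ x
      bact_mulact ha hb x := by
        simpa only [LinearMap.comp_apply, g_mul ha hb] using W.act_mul_add_smul_mul _ _ _ _ _ x
      bact_jacobi ha hb x := by
        simpa only [LinearMap.comp_apply, g_br ha hb] using
          W.act_act_eq_act_commutator_add _ _ _ x
      dm_bact ha x := by simp only [LinearMap.comp_apply, W.dm_act (g_mem ha), g_d] }
  exact ⟨V, rfl, rfl, fun _ _ => rfl, fun _ _ => rfl⟩

end UniversalPair

section Generators

variable {k : Type u} [Field k] {M : Type u} [AddCommGroup M] [Module k M] (P : DGPAOn k M)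

theorem mgen_one : mgen P P.one = 1 := by
  simpa only [map_one] using! RingQuot.mkAlgHom_rel k (EnvRel.relone (P := P))

theorem mgen_mul (a b : M) : mgen P (P.mul a b) = mgen P a * mgen P b := by
  simpa only [map_mul] using! RingQuot.mkAlgHom_rel k (EnvRel.relmul (P := P) a b)

variable {P} {i j : ℤ} {a b : M}

theorem hgen_mul (ha : a ∈ P.gr i) (hb : b ∈ P.gr j) :
    hgen P (P.mul a b) =
      mgen P a * hgen P b + (-1 : k) ^ (i * j) • (mgen P b * hgen P a) := by
  simpa only [map_add, map_smul, map_mul] using!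
    RingQuot.mkAlgHom_rel k (EnvRel.relhmul ha hb)

theorem mgen_br (ha : a ∈ P.gr i) (hb : b ∈ P.gr j) :
    mgen P (P.br a b) =
      hgen P a * mgen P b - (-1 : k) ^ (i * j) • (mgen P b * hgen P a) := by
  simpa only [map_sub, map_smul, map_mul] using!
    RingQuot.mkAlgHom_rel k (EnvRel.relmbr ha hb)

theorem hgen_br (ha : a ∈ P.gr i) (hb : b ∈ P.gr j) :
    hgen P (P.br a b) =
      hgen P a * hgen P b - (-1 : k) ^ (i * j) • (hgen P b * hgen P a) := by
  simpa only [map_sub, map_smul, map_mul] using!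
    RingQuot.mkAlgHom_rel k (EnvRel.relhbr ha hb)

theorem IsEnvDGA.uePair {E : DGAOn k (Env P)} (hE : IsEnvDGA P E) :
    UEPair P E (mgen P) (hgen P) := by
  obtain ⟨mul_eq, one_eq, mgen_mem, hgen_mem, d_mgen, d_hgen⟩ := hE
  refine ⟨mgen_mem, hgen_mem, fun a b => ?_, ?_, fun a => (d_mgen a).symm,
    fun a => (d_hgen a).symm, fun ha hb => ?_, fun ha hb => ?_, fun ha hb => ?_⟩
  · rw [mul_eq, mgen_mul]
  · rw [one_eq, mgen_one]
  · rw [mul_eq, mul_eq, hgen_br ha hb]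
  · rw [mul_eq, mul_eq, mgen_br ha hb]
  · rw [mul_eq, mul_eq, hgen_mul ha hb]

end Generators

/-- every left differential graded module over `A^e` becomes a left
differential graded Poisson module over `A` under `a ∗ x = m_a x` and `{a,x} = h_a x`. -/
theorem stmt_11 (k : Type u) [Field k] (M X : Type u)
    [AddCommGroup M] [Module k M] [AddCommGroup X] [Module k X]
    (P : DGPAOn k M) (E : DGAOn k (Env P)) (hE : IsEnvDGA P E)
    (W : DGModOn E X) :
    ∃ V : DGPModOn P X, ModCorr V W :=
  stmt_11_general hE.uePair W

end DGPaper

end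
end
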